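/- Define D : ℝ² → ℝ by D(x,t) = 128 cos(√3 t) − 108 sinh(x) + 63 sinh(3x) − 180 cosh(x) + 65 cosh(3x), and define q : ℝ² → ℂ by q(x,t) = 4 (4 e^{2x} − 1) e^{−2x − i t/√3} ( 1 + 4 e^{2x} − 4 e^{x + i√3 t} ) / D(x,t). Then q is smooth and satisfies i q_t − (1/√3) q_xx + 2√3 \overline{q} \overline{q}_x = 0 on the open set { (x,t) ∈ ℝ² : D(x,t) ≠ 0 }. -/

import Mathlib

/-- Partial derivative in the first (spatial) variable. -/
noncomputable def pdx {E : Type*} [NormedAddCommGroup E] [NormedSpace ℝ E]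
    (f : ℝ × ℝ → E) : ℝ × ℝ → E := fun p => fderiv ℝ f p (1, 0)

/-- Partial derivative in the second (time) variable. -/
noncomputable def pdt {E : Type*} [NormedAddCommGroup E] [NormedSpace ℝ E]
    (f : ℝ × ℝ → E) : ℝ × ℝ → E := fun p => fderiv ℝ f p (0, 1)

namespace Breather

noncomputable def X (x : ℝ) : ℂ := Complex.exp (x : ℂ)
noncomputable def Y (x : ℝ) : ℂ := Complex.exp (-(x : ℂ))
noncomputable def a (t : ℝ) : ℂ := Complex.exp (Complex.I * (t : ℂ) / (Real.sqrt 3 : ℂ))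
noncomputable def b (t : ℝ) : ℂ := Complex.exp (-(Complex.I * (t : ℂ) / (Real.sqrt 3 : ℂ)))

noncomputable def N (x t : ℝ) : ℂ :=
  4 * b t * (16 * X x ^ 2 - Y x ^ 2) - 16 * a t ^ 2 * (4 * X x - Y x)
noncomputable def Nx (x t : ℝ) : ℂ :=
  4 * b t * (32 * X x ^ 2 + 2 * Y x ^ 2) - 16 * a t ^ 2 * (4 * X x + Y x)
noncomputable def Nxx (x t : ℝ) : ℂ :=
  4 * b t * (64 * X x ^ 2 - 4 * Y x ^ 2) - 16 * a t ^ 2 * (4 * X x - Y x)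
noncomputable def Na (x t : ℝ) : ℂ :=
  -4 * b t * (16 * X x ^ 2 - Y x ^ 2) - 32 * a t ^ 2 * (4 * X x - Y x)
noncomputable def M (x t : ℝ) : ℂ :=
  4 * a t * (16 * X x ^ 2 - Y x ^ 2) - 16 * b t ^ 2 * (4 * X x - Y x)
noncomputable def Mx (x t : ℝ) : ℂ :=
  4 * a t * (32 * X x ^ 2 + 2 * Y x ^ 2) - 16 * b t ^ 2 * (4 * X x + Y x)
noncomputable def G (x t : ℝ) : ℂ :=
  64 * X x ^ 3 - 144 * X x - 36 * Y x + Y x ^ 3 + 64 * (a t ^ 3 + b t ^ 3)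
noncomputable def Gx (x : ℝ) : ℂ :=
  192 * X x ^ 3 - 144 * X x + 36 * Y x - 3 * Y x ^ 3
noncomputable def Gxx (x : ℝ) : ℂ :=
  576 * X x ^ 3 - 144 * X x - 36 * Y x + 9 * Y x ^ 3
noncomputable def Ga (t : ℝ) : ℂ := 192 * (a t ^ 3 - b t ^ 3)

lemma XY (x : ℝ) : X x * Y x = 1 := by simp [X, Y, ← Complex.exp_add]
lemma ab (t : ℝ) : a t * b t = 1 := by simp [a, b, ← Complex.exp_add]

lemma hX (x : ℝ) : HasDerivAt X (X x) x := by
  have h := (Complex.ofRealCLM.hasDerivAt (x := x)).cexp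
  exact HasDerivAt.congr_deriv (f := X) h (by simp [X])
lemma hY (x : ℝ) : HasDerivAt Y (-Y x) x := by
  have h := (Complex.ofRealCLM.hasDerivAt (x := x)).neg.cexp
  exact HasDerivAt.congr_deriv (f := Y) h (by simp [Y])
lemma ha (t : ℝ) : HasDerivAt a (Complex.I / (Real.sqrt 3 : ℂ) * a t) t := by
  have := (((Complex.ofRealCLM.hasDerivAt (x := t)).const_mul Complex.I).div_const
    (Real.sqrt 3 : ℂ)).cexp
  exact HasDerivAt.congr_deriv (f := a) this (by simp [a, mul_comm])
lemma hb (t : ℝ) : HasDerivAt b (-(Complex.I / (Real.sqrt 3 : ℂ) * b t)) t := by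
  have := (((Complex.ofRealCLM.hasDerivAt (x := t)).const_mul Complex.I).div_const
    (Real.sqrt 3 : ℂ)).neg.cexp
  exact HasDerivAt.congr_deriv (f := b) this (by simp [b, mul_comm])

lemma hNx (x t : ℝ) : HasDerivAt (fun x => N x t) (Nx x t) x := by
  unfold N
  have h := (((((hX x).pow 2).const_mul 16).sub ((hY x).pow 2)).const_mul (4 * b t)).sub
    ((((hX x).const_mul 4).sub (hY x)).const_mul (16 * a t ^ 2))
  refine h.congr_deriv ?_
  simp only [Nx]; push_cast; ring
lemma hNxx (x t : ℝ) : HasDerivAt (fun x => Nx x t) (Nxx x t) x := by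
  unfold Nx
  have h := (((((hX x).pow 2).const_mul 32).add (((hY x).pow 2).const_mul 2)).const_mul
    (4 * b t)).sub ((((hX x).const_mul 4).add (hY x)).const_mul (16 * a t ^ 2))
  refine h.congr_deriv ?_
  simp only [Nxx]; push_cast; ring
lemma hNa (x t : ℝ) :
    HasDerivAt (fun t => N x t) (Complex.I / (Real.sqrt 3 : ℂ) * Na x t) t := by
  unfold N
  have h := (((hb t).const_mul 4).mul_const (16 * X x ^ 2 - Y x ^ 2)).sub
    ((((ha t).pow 2).const_mul 16).mul_const (4 * X x - Y x))
  refine h.congr_deriv ?_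
  simp only [Na]; push_cast; ring
lemma hGx (x t : ℝ) : HasDerivAt (fun x => G x t) (Gx x) x := by
  unfold G
  have h := ((((((hX x).pow 3).const_mul 64).sub ((hX x).const_mul 144)).sub
    ((hY x).const_mul 36)).add ((hY x).pow 3)).add_const (64 * (a t ^ 3 + b t ^ 3))
  refine h.congr_deriv ?_
  simp only [Gx]; push_cast; ring
lemma hGxx (x : ℝ) : HasDerivAt Gx (Gxx x) x := by
  unfold Gx
  have h := (((((hX x).pow 3).const_mul 192).sub ((hX x).const_mul 144)).add
    ((hY x).const_mul 36)).sub (((hY x).pow 3).const_mul 3)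
  refine h.congr_deriv ?_
  simp only [Gxx]; push_cast; ring
lemma hGa (x t : ℝ) :
    HasDerivAt (fun t => G x t) (Complex.I / (Real.sqrt 3 : ℂ) * Ga t) t := by
  unfold G
  have h := ((((ha t).pow 3).add ((hb t).pow 3)).const_mul 64).const_add
    (64 * X x ^ 3 - 144 * X x - 36 * Y x + Y x ^ 3)
  refine h.congr_deriv ?_
  simp only [Ga]; push_cast; ring

lemma conjX (x : ℝ) : (starRingEnd ℂ) (X x) = X x := by
  simp [X, ← Complex.exp_conj]
lemma conjY (x : ℝ) : (starRingEnd ℂ) (Y x) = Y x := by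
  simp [Y, ← Complex.exp_conj]
lemma conja (t : ℝ) : (starRingEnd ℂ) (a t) = b t := by
  simp [a, b, ← Complex.exp_conj, neg_div]
lemma conjb (t : ℝ) : (starRingEnd ℂ) (b t) = a t := by
  rw [← conja, Complex.conj_conj]
lemma conjN (x t : ℝ) : (starRingEnd ℂ) (N x t) = M x t := by
  simp [N, M, conjX, conjY, conja, conjb, map_ofNat]
lemma conjNx (x t : ℝ) : (starRingEnd ℂ) (Nx x t) = Mx x t := by
  simp [Nx, Mx, conjX, conjY, conja, conjb, map_ofNat]
lemma conjG (x t : ℝ) : (starRingEnd ℂ) (G x t) = G x t := by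
  simp [G, conjX, conjY, conja, conjb, map_ofNat]; ring
lemma conjGx (x : ℝ) : (starRingEnd ℂ) (Gx x) = Gx x := by
  simp [Gx, conjX, conjY, map_ofNat]

lemma contX : ContDiff ℝ (⊤ : ℕ∞) X := by
  unfold X; exact Complex.ofRealCLM.contDiff.cexp
lemma contY : ContDiff ℝ (⊤ : ℕ∞) Y := by
  unfold Y; exact Complex.ofRealCLM.contDiff.neg.cexp
lemma conta : ContDiff ℝ (⊤ : ℕ∞) a := by
  unfold a
  exact ((contDiff_const.mul Complex.ofRealCLM.contDiff).div_const _).cexp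
lemma contb : ContDiff ℝ (⊤ : ℕ∞) b := by
  unfold b
  exact ((contDiff_const.mul Complex.ofRealCLM.contDiff).div_const _).neg.cexp

lemma contN : ContDiff ℝ (⊤ : ℕ∞) (fun p : ℝ × ℝ => N p.1 p.2) := by
  have := contX; have := contY; have := conta; have := contb
  unfold N; fun_prop
lemma contNx : ContDiff ℝ (⊤ : ℕ∞) (fun p : ℝ × ℝ => Nx p.1 p.2) := by
  have := contX; have := contY; have := conta; have := contb
  unfold Nx; fun_prop
lemma contG : ContDiff ℝ (⊤ : ℕ∞) (fun p : ℝ × ℝ => G p.1 p.2) := by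
  have := contX; have := contY; have := conta; have := contb
  unfold G; fun_prop
lemma contGx : ContDiff ℝ (⊤ : ℕ∞) (fun p : ℝ × ℝ => Gx p.1) := by
  have := contX; have := contY
  unfold Gx; fun_prop

lemma dquot {f g : ℝ × ℝ → ℂ} {p : ℝ × ℝ} (hf : DifferentiableAt ℝ f p)
    (hg : DifferentiableAt ℝ g p) (h : g p ≠ 0) :
    DifferentiableAt ℝ (fun p => f p / g p) p := by
  simp only [div_eq_mul_inv]
  exact hf.fun_mul (hg.fun_inv h)

lemma pdx_eq {f : ℝ × ℝ → ℂ} {p : ℝ × ℝ} {d : ℂ} (hf : DifferentiableAt ℝ f p)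
    (h : HasDerivAt (fun x => f (x, p.2)) d p.1) : pdx f p = d := by
  have h1 : HasDerivAt (fun x : ℝ => (x, p.2)) ((1 : ℝ), (0 : ℝ)) p.1 :=
    (hasDerivAt_id p.1).prodMk (hasDerivAt_const p.1 p.2)
  exact (HasFDerivAt.comp_hasDerivAt (f := fun x : ℝ => (x, p.2)) p.1
    hf.hasFDerivAt h1).unique h
lemma pdt_eq {f : ℝ × ℝ → ℂ} {p : ℝ × ℝ} {d : ℂ} (hf : DifferentiableAt ℝ f p)
    (h : HasDerivAt (fun t => f (p.1, t)) d p.2) : pdt f p = d := by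
  have h1 : HasDerivAt (fun t : ℝ => (p.1, t)) ((0 : ℝ), (1 : ℝ)) p.2 :=
    (hasDerivAt_const p.2 p.1).prodMk (hasDerivAt_id p.2)
  exact (HasFDerivAt.comp_hasDerivAt (f := fun t : ℝ => (p.1, t)) p.2
    hf.hasFDerivAt h1).unique h

/-- The polynomial identity behind the equation. -/
lemma key (x t : ℝ) :
    G x t ^ 2 * Na x t - N x t * G x t * Ga t + G x t ^ 2 * Nxx x t
      - 2 * Nx x t * Gx x * G x t - N x t * G x t * Gxx x + 2 * N x t * Gx x ^ 2
      - 6 * M x t * (Mx x t * G x t - M x t * Gx x) = 0 := by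
  have hx := XY x
  have ht := ab t
  have hX0 : X x ≠ 0 := left_ne_zero_of_mul_eq_one hx
  have ha0 : a t ≠ 0 := left_ne_zero_of_mul_eq_one ht
  have hY : Y x = (X x)⁻¹ := eq_inv_of_mul_eq_one_right hx
  have hb : b t = (a t)⁻¹ := eq_inv_of_mul_eq_one_right ht
  simp only [G, N, Nx, Nxx, Na, M, Mx, Gx, Gxx, Ga, hY, hb]
  generalize X x = u at *
  generalize a t = v at *
  field_simp
  ring

lemma G_eq (x t : ℝ) : ((128 * Real.cos (Real.sqrt 3 * t) - 108 * Real.sinh x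
      + 63 * Real.sinh (3 * x) - 180 * Real.cosh x + 65 * Real.cosh (3 * x) : ℝ) : ℂ)
      = G x t := by
  have hs : (Real.sqrt 3 : ℂ) ≠ 0 := by
    simp
  have hs2 : (Real.sqrt 3 : ℂ) ^ 2 = 3 := by
    rw [← Complex.ofReal_pow]; norm_num
  have e1 : Complex.exp (((Real.sqrt 3 : ℂ) * t) * Complex.I) = a t ^ 3 := by
    rw [a, ← Complex.exp_nat_mul]; congr 1
    field_simp; rw [hs2]; push_cast; ring
  have e2 : Complex.exp (-((Real.sqrt 3 : ℂ) * t) * Complex.I) = b t ^ 3 := by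
    rw [b, ← Complex.exp_nat_mul]; congr 1
    field_simp; rw [hs2]; push_cast; ring
  have e3 : Complex.exp (3 * (x : ℂ)) = X x ^ 3 := by
    rw [X, ← Complex.exp_nat_mul]; norm_num
  have e4 : Complex.exp (-(3 * (x : ℂ))) = Y x ^ 3 := by
    rw [Y, ← Complex.exp_nat_mul]; congr 1; push_cast; ring
  push_cast
  rw [Complex.cos, Complex.sinh, Complex.sinh, Complex.cosh, Complex.cosh, e1, e2, e3, e4]
  change _ = 64 * X x ^ 3 - 144 * X x - 36 * Y x + Y x ^ 3 + 64 * (a t ^ 3 + b t ^ 3)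
  rw [X, Y]
  ring

lemma N_eq (x t : ℝ) : 4 * ((4 * Real.exp (2 * x) - 1 : ℝ) : ℂ)
        * Complex.exp (-2 * (x : ℂ) - Complex.I * (t : ℂ) / (Real.sqrt 3 : ℂ))
        * (1 + 4 * ((Real.exp (2 * x) : ℝ) : ℂ)
            - 4 * Complex.exp ((x : ℂ) + Complex.I * (Real.sqrt 3 : ℂ) * (t : ℂ)))
      = N x t := by
  have hs : (Real.sqrt 3 : ℂ) ≠ 0 := by
    simp
  have hs2 : (Real.sqrt 3 : ℂ) ^ 2 = 3 := by
    rw [← Complex.ofReal_pow]; norm_num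
  have e1 : Complex.exp ((x : ℂ) + Complex.I * (Real.sqrt 3 : ℂ) * (t : ℂ))
      = X x * a t ^ 3 := by
    rw [a, X, ← Complex.exp_nat_mul, ← Complex.exp_add]; congr 1
    field_simp; push_cast; linear_combination Complex.I * t * hs2
  have e2 : Complex.exp (-2 * (x : ℂ) - Complex.I * (t : ℂ) / (Real.sqrt 3 : ℂ))
      = Y x ^ 2 * b t := by
    rw [b, Y, ← Complex.exp_nat_mul, ← Complex.exp_add]; congr 1; push_cast; ring
  have e3 : Complex.exp (2 * (x : ℂ)) = X x ^ 2 := by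
    rw [X, ← Complex.exp_nat_mul]; norm_num
  push_cast
  rw [e1, e2, e3, N]
  have hx := XY x
  have ht := ab t
  have hX0 : X x ≠ 0 := left_ne_zero_of_mul_eq_one hx
  have ha0 : a t ≠ 0 := left_ne_zero_of_mul_eq_one ht
  rw [eq_inv_of_mul_eq_one_right hx, eq_inv_of_mul_eq_one_right ht]
  field_simp
  ring

end Breather

open Breather

/-- The (singular) breather
`q(x,t) = 4(4e^{2x}-1)e^{-2x-it/√3}(1+4e^{2x}-4e^{x+i√3 t})/D(x,t)`,
with `D(x,t) = 128cos(√3 t) - 108 sinh x + 63 sinh 3x - 180 cosh x + 65 cosh 3x`,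
is smooth and solves `i q_t - (1/√3) q_xx + 2√3 q̄ q̄_x = 0` on `{D ≠ 0}`. -/
theorem breather_soliton
    (D : ℝ × ℝ → ℝ)
    (hD : D = fun p => 128 * Real.cos (Real.sqrt 3 * p.2) - 108 * Real.sinh p.1
      + 63 * Real.sinh (3 * p.1) - 180 * Real.cosh p.1 + 65 * Real.cosh (3 * p.1))
    (q : ℝ × ℝ → ℂ)
    (hq : q = fun p =>
      4 * ((4 * Real.exp (2 * p.1) - 1 : ℝ) : ℂ)
        * Complex.exp (-2 * (p.1 : ℂ) - Complex.I * (p.2 : ℂ) / (Real.sqrt 3 : ℂ))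
        * (1 + 4 * ((Real.exp (2 * p.1) : ℝ) : ℂ)
            - 4 * Complex.exp ((p.1 : ℂ) + Complex.I * (Real.sqrt 3 : ℂ) * (p.2 : ℂ)))
        / ((D p : ℝ) : ℂ)) :
    ContDiffOn ℝ (⊤ : ℕ∞) q {p : ℝ × ℝ | D p ≠ 0} ∧
    ∀ p ∈ {p : ℝ × ℝ | D p ≠ 0},
      Complex.I * pdt q p - (1 / (Real.sqrt 3 : ℂ)) * pdx (pdx q) p
        + 2 * (Real.sqrt 3 : ℂ) * (starRingEnd ℂ) (q p) * (starRingEnd ℂ) (pdx q p) = 0 := by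
  have hDG : ∀ p, ((D p : ℝ) : ℂ) = G p.1 p.2 := by
    intro p; rw [hD]; exact G_eq p.1 p.2
  have hqN : q = fun p => N p.1 p.2 / G p.1 p.2 := by
    rw [hq]; funext p; rw [N_eq, hDG]
  have hset : {p : ℝ × ℝ | D p ≠ 0} = {p : ℝ × ℝ | G p.1 p.2 ≠ 0} := by
    ext p; simp only [Set.mem_ofPred_eq, ← hDG]; simp
  rw [hset, hqN]
  have hopen : IsOpen {p : ℝ × ℝ | G p.1 p.2 ≠ 0} :=
    isOpen_ne_fun contG.continuous continuous_const
  have htop : ((⊤ : ℕ∞) : WithTop ℕ∞) ≠ 0 := by simp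
  have dN := contN.differentiable htop
  have dNx := contNx.differentiable htop
  have dG := contG.differentiable htop
  have dGx := contGx.differentiable htop
  have hsm : ContDiffOn ℝ (⊤ : ℕ∞) (fun p : ℝ × ℝ => N p.1 p.2 / G p.1 p.2)
      {p : ℝ × ℝ | G p.1 p.2 ≠ 0} := by
    have hinv := contG.contDiffOn (s := {p : ℝ × ℝ | G p.1 p.2 ≠ 0}) |>.inv (fun p hp => hp)
    simp only [div_eq_mul_inv]
    exact contN.contDiffOn.mul hinv
  refine ⟨hsm, ?_⟩
  have h1 : ∀ p ∈ {p : ℝ × ℝ | G p.1 p.2 ≠ 0},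
      pdx (fun p : ℝ × ℝ => N p.1 p.2 / G p.1 p.2) p
        = (Nx p.1 p.2 * G p.1 p.2 - N p.1 p.2 * Gx p.1) / G p.1 p.2 ^ 2 := by
    intro p hp
    refine pdx_eq ?_ ?_
    · exact dquot (dN p) (dG p) hp
    · refine HasDerivAt.fun_div (hNx p.1 p.2) (hGx p.1 p.2) ?_
      exact hp
  intro p hp
  have hp' : G p.1 p.2 ≠ 0 := hp
  have hev : pdx (fun p : ℝ × ℝ => N p.1 p.2 / G p.1 p.2) =ᶠ[nhds p]
      fun p => (Nx p.1 p.2 * G p.1 p.2 - N p.1 p.2 * Gx p.1) / G p.1 p.2 ^ 2 := by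
    filter_upwards [hopen.mem_nhds hp] with r hr using h1 r hr
  have h2 : pdx (pdx (fun p : ℝ × ℝ => N p.1 p.2 / G p.1 p.2)) p
      = pdx (fun p => (Nx p.1 p.2 * G p.1 p.2 - N p.1 p.2 * Gx p.1) / G p.1 p.2 ^ 2) p := by
    rw [pdx, hev.fderiv_eq]; rfl
  have d1 : DifferentiableAt ℝ (fun p : ℝ × ℝ => N p.1 p.2 / G p.1 p.2) p := by
    exact dquot (dN p) (dG p) hp
  have d2 : DifferentiableAt ℝ (fun p : ℝ × ℝ =>
      (Nx p.1 p.2 * G p.1 p.2 - N p.1 p.2 * Gx p.1) / G p.1 p.2 ^ 2) p := by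
    exact dquot (((dNx p).fun_mul (dG p)).fun_sub ((dN p).fun_mul (dGx p)))
      ((dG p).fun_pow 2) (pow_ne_zero 2 hp')
  have c2 := HasDerivAt.fun_div (((hNxx p.1 p.2).fun_mul (hGx p.1 p.2)).fun_sub
    ((hNx p.1 p.2).fun_mul (hGxx p.1))) ((hGx p.1 p.2).fun_pow 2) (by exact pow_ne_zero 2 hp')
  have c1 := HasDerivAt.fun_div (hNa p.1 p.2) (hGa p.1 p.2) (by exact hp')
  have h3 := pdx_eq d2 c2
  have h4 := pdt_eq d1 c1
  rw [h2, h3, h4, h1 p hp]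
  simp only [map_div₀, map_sub, map_mul, map_pow, conjN, conjNx, conjG, conjGx]
  have hs : (Real.sqrt 3 : ℂ) ≠ 0 := by
    simp
  have hs2 : (Real.sqrt 3 : ℂ) ^ 2 = 3 := by
    rw [← Complex.ofReal_pow]; norm_num
  have hk := key p.1 p.2
  generalize (Real.sqrt 3 : ℂ) = s at *
  generalize G p.1 p.2 = g at *
  have hI : Complex.I ^ 2 = -1 := Complex.I_sq
  generalize Complex.I = j at *
  generalize N p.1 p.2 = n at *
  generalize Nx p.1 p.2 = nx at *
  generalize Nxx p.1 p.2 = nxx at *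
  generalize Na p.1 p.2 = na at *
  generalize M p.1 p.2 = m at *
  generalize Mx p.1 p.2 = mx at *
  generalize Gx p.1 = gx at *
  generalize Gxx p.1 = gxx at *
  generalize Ga p.2 = ga at *
  have goal : j * ((j / s * na * g - n * (j / s * ga)) / g ^ 2) - 1 / s *
      ((nxx * g - 2 * nx * gx - n * gxx) / g ^ 2 + 2 * n * gx ^ 2 / g ^ 3 - 0)
      + 2 * s * (m / g) * ((mx * g - m * gx) / g ^ 2) = 0 := by
    have : j * ((j / s * na * g - n * (j / s * ga)) / g ^ 2) - 1 / s *
      ((nxx * g - 2 * nx * gx - n * gxx) / g ^ 2 + 2 * n * gx ^ 2 / g ^ 3 - 0)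
      + 2 * s * (m / g) * ((mx * g - m * gx) / g ^ 2) =
      (j ^ 2 * (na * g - n * ga) * g - (nxx * g - 2 * nx * gx - n * gxx) * g - 2 * n * gx ^ 2
       + 2 * s ^ 2 * m * (mx * g - m * gx)) / (s * g ^ 3) := by
      field_simp
      ring
    rw [this, hI, hs2, div_eq_zero_iff]
    left
    linear_combination -hk
  rw [← goal]
  push_cast
  field_simp
  ring
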